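/- For every natural number ℓ ≥ 6, the Shrikhande graph contains no induced subgraph isomorphic to the complement of the ℓ-cycle; that is, there is no injective map f from Fin ℓ to its vertex set such that f(i) and f(j) are adjacent if and only if i ≠ j and i and j are not consecutive modulo ℓ. -/

import Mathlib

/-!
In the complement of an `ℓ`-cycle with `6 ≤ ℓ`, the vertices `1, 4, 0, 3` and `1, 4, 2, 5` form two
induced 4-cycles in which the vertex `1` has the same neighbour `4` but different other neighbours
`3` and `5`. In the Shrikhande graph, however, an induced 4-cycle `a, b, c, d` is straight:
`b - a = a - d`, so `d` is determined by `a` and `b`.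

Indeed, this is the Cayley graph of `(ZMod 4)²` with connection set `±(0,1), ±(1,0), ±(1,1)`, so
the neighbours of `a` form a hexagon in which `2a - b` is opposite to `b`. If `d` is any other
neighbour of `a` that is distinct from `b` and not adjacent to it, then `b + d - a` is the vertex of
the hexagon between `b` and `d`. As `b` and `d` have only two common neighbours, `c` must be that
vertex, and is then adjacent to `a`.
-/

/-- The Shrikhande graph on `(ZMod 4) × (ZMod 4)`: distinct vertices `(a,b)` and `(c,d)` are
adjacent iff `(a-c, b-d) ∈ {(0,1),(0,3),(1,0),(3,0),(1,1),(3,3)}` (arithmetic mod 4; this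
difference set is closed under negation, so the symmetrization `fromRel` does not change it). -/
def shrikhande : SimpleGraph (ZMod 4 × ZMod 4) :=
  SimpleGraph.fromRel (fun u v =>
    (u.1 - v.1, u.2 - v.2) ∈
      ({(0, 1), (0, 3), (1, 0), (3, 0), (1, 1), (3, 3)} : Finset (ZMod 4 × ZMod 4)))

open SimpleGraph

/-- The vertices `a, b, c, d`, in this cyclic order, form an induced 4-cycle of `G`. The diagonals
are edges of the complement, which makes them pairs of distinct non-adjacent vertices. -/
structure IsInducedFourCycle {V : Type*} (G : SimpleGraph V) (a b c d : V) : Prop where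
  adj_ab : G.Adj a b
  adj_bc : G.Adj b c
  adj_cd : G.Adj c d
  adj_da : G.Adj d a
  compl_adj_ac : Gᶜ.Adj a c
  compl_adj_bd : Gᶜ.Adj b d

namespace IsInducedFourCycle

variable {V W : Type*} {G : SimpleGraph V} {H : SimpleGraph W} {a b c d : V}

theorem map (φ : G ↪g H) (h : IsInducedFourCycle G a b c d) :
    IsInducedFourCycle H (φ a) (φ b) (φ c) (φ d) where
  adj_ab := φ.map_adj_iff.2 h.adj_ab
  adj_bc := φ.map_adj_iff.2 h.adj_bc
  adj_cd := φ.map_adj_iff.2 h.adj_cd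
  adj_da := φ.map_adj_iff.2 h.adj_da
  compl_adj_ac := ⟨φ.injective.ne h.compl_adj_ac.ne, φ.map_adj_iff.not.2 h.compl_adj_ac.2⟩
  compl_adj_bd := ⟨φ.injective.ne h.compl_adj_bd.ne, φ.map_adj_iff.not.2 h.compl_adj_bd.2⟩

theorem rotate_two (h : IsInducedFourCycle G a b c d) : IsInducedFourCycle G c d a b :=
  ⟨h.adj_cd, h.adj_da, h.adj_ab, h.adj_bc, h.compl_adj_ac.symm, h.compl_adj_bd.symm⟩

end IsInducedFourCycle

section ComplementOfCycle

variable {ℓ : ℕ}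

theorem compl_cycleGraph_adj_iff (i j : Fin ℓ) :
    (cycleGraph ℓ)ᶜ.Adj i j ↔
      i ≠ j ∧ ¬ ((i.val + 1) % ℓ = j.val ∨ (j.val + 1) % ℓ = i.val) := by
  obtain _ | _ | n := ℓ
  · exact i.elim0
  · simp [Fin.fin_one_eq_zero]
  · have succ_eq (u v : Fin (n + 2)) : v - u = 1 ↔ (u.val + 1) % (n + 2) = v.val := by
      rw [sub_eq_iff_eq_add', eq_comm, Fin.ext_iff, Fin.val_add, Fin.val_one]
    rw [compl_adj, cycleGraph_adj, succ_eq, succ_eq, or_comm]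

theorem compl_cycleGraph_adj_iff_of_lt {i j : Fin ℓ} (hij : i < j) :
    (cycleGraph ℓ)ᶜ.Adj i j ↔ i.val + 1 ≠ j.val ∧ ¬ (i.val = 0 ∧ j.val + 1 = ℓ) := by
  rw [compl_cycleGraph_adj_iff, and_iff_right hij.ne, Nat.mod_eq_of_lt (by omega : i.val + 1 < ℓ)]
  obtain hj | hj : j.val + 1 = ℓ ∨ j.val + 1 < ℓ := by omega
  · rw [hj, Nat.mod_self]
    omega
  · rw [Nat.mod_eq_of_lt hj]
    omega

-- The condition `hwrap` matters only for `i = 0`, where it keeps `j + 1` from being the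
-- cyclic predecessor of `i`.
theorem isInducedFourCycle_compl_cycleGraph {i j : ℕ} (hij : i + 2 < j) (hj : j + 1 < ℓ)
    (hwrap : j + 2 < ℓ + i) :
    IsInducedFourCycle (cycleGraph ℓ)ᶜ
      ⟨i, by omega⟩ ⟨j, by omega⟩ ⟨i + 1, by omega⟩ ⟨j + 1, hj⟩ := by
  have adj_iff {u v : ℕ} (huv : u < v) (hv : v < ℓ) :
      (cycleGraph ℓ)ᶜ.Adj ⟨u, huv.trans hv⟩ ⟨v, hv⟩ ↔ u + 1 ≠ v ∧ ¬ (u = 0 ∧ v + 1 = ℓ) :=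
    compl_cycleGraph_adj_iff_of_lt huv
  constructor
  · exact (adj_iff (by omega) _).2 (by omega)
  · exact ((adj_iff (by omega) _).2 (by omega)).symm
  · exact (adj_iff (by omega) _).2 (by omega)
  · exact ((adj_iff (by omega) _).2 (by omega)).symm
  · exact (compl_adj _ _ _).2 ⟨by simp, by simp [adj_iff]⟩
  · exact (compl_adj _ _ _).2 ⟨by simp, by simp [adj_iff]⟩

theorem isEmpty_compl_cycleGraph_embedding {V : Type*} {G : SimpleGraph V}
    (hG : ∀ ⦃a b c d c' d'⦄,
      IsInducedFourCycle G a b c d → IsInducedFourCycle G a b c' d' → d = d')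
    (hℓ : 6 ≤ ℓ) : IsEmpty ((cycleGraph ℓ)ᶜ ↪g G) := by
  refine ⟨fun φ => ?_⟩
  have cycle_three := (isInducedFourCycle_compl_cycleGraph (ℓ := ℓ) (i := 0) (j := 3)
    (by omega) (by omega) (by omega)).rotate_two
  have cycle_five := isInducedFourCycle_compl_cycleGraph (ℓ := ℓ) (i := 1) (j := 4)
    (by omega) (by omega) (by omega)
  have three_eq_five := φ.injective (hG (cycle_three.map φ) (cycle_five.map φ))
  simp at three_eq_five

end ComplementOfCycle

section Shrikhande

instance : DecidableRel shrikhande.Adj :=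
  inferInstanceAs (DecidableRel (SimpleGraph.fromRel _).Adj)

theorem shrikhande_adj_translate {a b : ZMod 4 × ZMod 4} (h : shrikhande.Adj a b)
    (u : ZMod 4 × ZMod 4) : shrikhande.Adj u (u + b - a) := by
  have h' : (circulantGraph _).Adj (a + (u - a)) (b + (u - a)) :=
    circulantGraph_adj_translate.2 h
  rwa [add_sub_cancel, add_sub_left_comm, ← add_sub_assoc] at h'

theorem shrikhande_card_inter_neighborFinset_of_not_adj :
    ∀ u v, shrikhandeᶜ.Adj u v →
      (shrikhande.neighborFinset u ∩ shrikhande.neighborFinset v).card = 2 := by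
  decide +kernel

theorem shrikhande_adj_add_sub_of_not_adj :
    ∀ a b d, shrikhande.Adj a b → shrikhande.Adj a d → shrikhandeᶜ.Adj b d → b + d ≠ a + a →
      shrikhande.Adj a (b + d - a) := by
  decide +kernel

theorem shrikhande_add_eq_of_isInducedFourCycle {a b c d : ZMod 4 × ZMod 4}
    (h : IsInducedFourCycle shrikhande a b c d) : b + d = a + a := by
  by_contra hne
  have adj_a : shrikhande.Adj a (b + d - a) :=
    shrikhande_adj_add_sub_of_not_adj a b d h.adj_ab h.adj_da.symm h.compl_adj_bd hne
  have adj_b : shrikhande.Adj b (b + d - a) := shrikhande_adj_translate h.adj_da.symm b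
  have adj_d : shrikhande.Adj d (b + d - a) :=
    add_comm d b ▸ shrikhande_adj_translate h.adj_ab d
  have ne_c : b + d - a ≠ c := fun hc => h.compl_adj_ac.2 (hc ▸ adj_a)
  have three_common : 2 < (shrikhande.neighborFinset b ∩ shrikhande.neighborFinset d).card := by
    refine Finset.two_lt_card.2
      ⟨a, ?_, c, ?_, b + d - a, ?_, h.compl_adj_ac.ne, adj_a.ne, ne_c.symm⟩ <;>
    simp only [Finset.mem_inter, mem_neighborFinset]
    exacts [⟨h.adj_ab.symm, h.adj_da⟩, ⟨h.adj_bc, h.adj_cd.symm⟩, ⟨adj_b, adj_d⟩]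
  exact three_common.ne' (shrikhande_card_inter_neighborFinset_of_not_adj b d h.compl_adj_bd)

end Shrikhande

/-- For every `ℓ ≥ 6`, the Shrikhande graph has no induced subgraph isomorphic to the
complement of the `ℓ`-cycle. -/
theorem shrikhande_no_induced_complement_Cl (ℓ : ℕ) (hℓ : 6 ≤ ℓ) :
    ¬ ∃ f : Fin ℓ → ZMod 4 × ZMod 4, Function.Injective f ∧
      ∀ i j : Fin ℓ, shrikhande.Adj (f i) (f j) ↔
        (i ≠ j ∧ ¬ ((i.val + 1) % ℓ = j.val ∨ (j.val + 1) % ℓ = i.val)) := by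
  rintro ⟨f, hinj, hadj⟩
  let φ : (cycleGraph ℓ)ᶜ ↪g shrikhande :=
    { toFun := f
      inj' := hinj
      map_rel_iff' := fun {i j} => (hadj i j).trans (compl_cycleGraph_adj_iff i j).symm }
  refine (isEmpty_compl_cycleGraph_embedding (fun _ _ _ _ _ _ h h' => ?_) hℓ).false φ
  exact add_left_cancel <| (shrikhande_add_eq_of_isInducedFourCycle h).trans
    (shrikhande_add_eq_of_isInducedFourCycle h').symm
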